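/- The map θ0 : A^∨ → Hom_A(J, A) sending φ to the restriction to J of 1⊗φ : A ⊗[k] A → A (a⊗b ↦ φ(b)·a) is A-linear, and the adjoint map θ1 : J → Hom_A(A^∨, A), defined by θ1(u)(φ) = (1⊗φ)(u), is an isomorphism of A-modules. -/

import Mathlib

open TensorProduct

noncomputable section

variable (k A : Type*) [CommRing k] [CommRing A] [Algebra k A]

/-- `I`, the kernel of the multiplication map `μ : A ⊗[k] A → A`, as an ideal of `A ⊗[k] A`. -/
def Imul : Ideal (A ⊗[k] A) := RingHom.ker (Algebra.TensorProduct.lmul' k (S := A))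

/-- `J = Ann_{A ⊗[k] A}(I)`, the annihilator of `I`.  Via the instance
`Algebra A (A ⊗[k] A)` given by `a ↦ a ⊗ 1`, the ideal `J` is an `A`-module. -/
def Jann : Ideal (A ⊗[k] A) := Submodule.annihilator (Imul k A)

/-- The `k`-linear map `1 ⊗ φ : A ⊗[k] A → A`, `a ⊗ b ↦ φ(b)·a`. -/
def oneTensorMap (φ : Module.Dual k A) : A ⊗[k] A →ₗ[k] A :=
  TensorProduct.lift (LinearMap.flip ((LinearMap.lsmul k A).comp φ))

/-- The `A`-module structure on `A^∨ = Hom_k(A,k)` given by `(a·φ)(b) = φ(ab)`. -/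
instance dualSMul : SMul A (Module.Dual k A) :=
  ⟨fun a φ => φ.comp (LinearMap.mulLeft k a)⟩

theorem dual_smul_apply (a : A) (φ : Module.Dual k A) (b : A) : (a • φ) b = φ (a * b) := rfl

instance dualModule : Module A (Module.Dual k A) where
  one_smul φ := LinearMap.ext fun b => by rw [dual_smul_apply, one_mul]
  mul_smul a a' φ := LinearMap.ext fun b => by
    rw [dual_smul_apply, dual_smul_apply, dual_smul_apply]; congr 1; ring
  smul_zero a := LinearMap.ext fun b => by rw [dual_smul_apply]; rfl
  smul_add a φ ψ := LinearMap.ext fun b => by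
    simp only [LinearMap.add_apply, dual_smul_apply]
  add_smul a a' φ := LinearMap.ext fun b => by
    simp only [LinearMap.add_apply, dual_smul_apply, add_mul, map_add]
  zero_smul φ := LinearMap.ext fun b => by
    rw [dual_smul_apply, zero_mul, map_zero]; rfl

theorem oneTensorMap_tmul (φ : Module.Dual k A) (a b : A) :
    oneTensorMap k A φ (a ⊗ₜ[k] b) = φ b • a := rfl

theorem oneTensorMap_left (φ : Module.Dual k A) (a : A) (u : A ⊗[k] A) :
    oneTensorMap k A φ ((a ⊗ₜ[k] 1) * u) = a * oneTensorMap k A φ u := by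
  induction u using TensorProduct.induction_on with
  | zero => simp
  | tmul x y =>
    rw [Algebra.TensorProduct.tmul_mul_tmul, one_mul, oneTensorMap_tmul, oneTensorMap_tmul,
      mul_smul_comm]
  | add x y hx hy => rw [mul_add, map_add, map_add, hx, hy, mul_add]

theorem oneTensorMap_right (φ : Module.Dual k A) (a : A) (u : A ⊗[k] A) :
    oneTensorMap k A φ ((1 ⊗ₜ[k] a) * u) = oneTensorMap k A (a • φ) u := by
  induction u using TensorProduct.induction_on with
  | zero => simp
  | tmul x y =>
    rw [Algebra.TensorProduct.tmul_mul_tmul, one_mul, oneTensorMap_tmul, oneTensorMap_tmul,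
      dual_smul_apply]
  | add x y hx hy => rw [mul_add, map_add, map_add, hx, hy]

theorem oneTensorMap_add (φ ψ : Module.Dual k A) (u : A ⊗[k] A) :
    oneTensorMap k A (φ + ψ) u = oneTensorMap k A φ u + oneTensorMap k A ψ u := by
  induction u using TensorProduct.induction_on with
  | zero => simp
  | tmul x y =>
    rw [oneTensorMap_tmul, oneTensorMap_tmul, oneTensorMap_tmul, LinearMap.add_apply, add_smul]
  | add x y hx hy => rw [map_add, map_add, map_add, hx, hy]; abel

theorem mem_Jann_iff (u : A ⊗[k] A) :
    u ∈ Jann k A ↔ ∀ a : A, (1 ⊗ₜ[k] a) * u = (a ⊗ₜ[k] 1) * u := by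
  have hI : Imul k A = Ideal.span (Set.range fun s : A => (1 : A) ⊗ₜ[k] s - s ⊗ₜ[k] (1 : A)) :=
    (KaehlerDifferential.span_range_eq_ideal k A).symm
  rw [Jann, hI, Ideal.span, Submodule.mem_annihilator_span]
  constructor
  · intro h a
    have := h ⟨_, a, rfl⟩
    simp only [smul_eq_mul] at this
    rw [← sub_eq_zero, ← sub_mul, mul_comm]
    exact this
  · rintro h ⟨_, a, rfl⟩
    simp only [smul_eq_mul]
    rw [mul_comm, sub_mul, h a, sub_self]

theorem exists_dual_basis [Module.Finite k A] [Module.Projective k A] :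
    ∃ (n : ℕ) (e : Fin n → A) (f : Fin n → Module.Dual k A),
      ∀ b : A, ∑ i, f i b • e i = b := by
  obtain ⟨n, p, s, -, -, h⟩ := Module.Finite.exists_comp_eq_id_of_projective k A
  refine ⟨n, fun i => p (Pi.single i 1), fun i => (LinearMap.proj i).comp s, fun b => ?_⟩
  have hb : p (s b) = b := LinearMap.congr_fun h b
  conv_rhs => rw [← hb, pi_eq_sum_univ' (s b), map_sum]
  refine Finset.sum_congr rfl fun i _ => ?_
  simp only [LinearMap.comp_apply, LinearMap.proj_apply, map_smul]

theorem dual_expand {n : ℕ} {e : Fin n → A} {f : Fin n → Module.Dual k A}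
    (h : ∀ b : A, ∑ i, f i b • e i = b) (u : A ⊗[k] A) :
    ∑ i, oneTensorMap k A (f i) u ⊗ₜ[k] e i = u := by
  induction u using TensorProduct.induction_on with
  | zero => simp
  | tmul x y =>
    conv_rhs => rw [← h y, TensorProduct.tmul_sum]
    refine Finset.sum_congr rfl fun i _ => ?_
    rw [oneTensorMap_tmul, TensorProduct.smul_tmul]
  | add x y hx hy =>
    conv_rhs => rw [← hx, ← hy]
    simp only [map_add, TensorProduct.add_tmul, Finset.sum_add_distrib]

theorem oneTensorMap_ext [Module.Finite k A] [Module.Projective k A] {u v : A ⊗[k] A}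
    (h : ∀ φ, oneTensorMap k A φ u = oneTensorMap k A φ v) : u = v := by
  obtain ⟨n, e, f, hef⟩ := exists_dual_basis k A
  rw [← dual_expand k A hef u, ← dual_expand k A hef v]
  simp only [h]

theorem coe_smul_Jann (a : A) (u : ↥(Jann k A)) :
    ((a • u : ↥(Jann k A)) : A ⊗[k] A) = (a ⊗ₜ[k] 1) * (u : A ⊗[k] A) := by
  change a • (u : A ⊗[k] A) = _
  rw [Algebra.smul_def]; rfl

theorem oneTensorMap_smul_dual (a : A) (φ : Module.Dual k A) (u : ↥(Jann k A)) :
    oneTensorMap k A (a • φ) (u : A ⊗[k] A) = a * oneTensorMap k A φ (u : A ⊗[k] A) := by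
  rw [← oneTensorMap_right, (mem_Jann_iff k A _).1 u.2 a, oneTensorMap_left]

/-- The map `θ0`. -/
def thetaZero : Module.Dual k A →ₗ[A] (↥(Jann k A) →ₗ[A] A) where
  toFun φ :=
    { toFun := fun u => oneTensorMap k A φ (u : A ⊗[k] A)
      map_add' := fun u v => by rw [Submodule.coe_add, map_add]
      map_smul' := fun a u => by
        rw [coe_smul_Jann, oneTensorMap_left, RingHom.id_apply, smul_eq_mul] }
  map_add' φ ψ := LinearMap.ext fun u => oneTensorMap_add k A φ ψ u
  map_smul' a φ := LinearMap.ext fun u => oneTensorMap_smul_dual k A a φ u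

/-- The map `θ1`. -/
def thetaOne : ↥(Jann k A) →ₗ[A] (Module.Dual k A →ₗ[A] A) := (thetaZero k A).flip

theorem thetaOne_apply (u : ↥(Jann k A)) (φ : Module.Dual k A) :
    thetaOne k A u φ = oneTensorMap k A φ (u : A ⊗[k] A) := rfl

theorem thetaOne_bijective [Module.Finite k A] [Module.Projective k A] :
    Function.Bijective (thetaOne k A) := by
  constructor
  · intro u v h
    apply Subtype.ext
    apply oneTensorMap_ext
    intro φ
    exact LinearMap.congr_fun h φ
  · intro g
    obtain ⟨n, e, f, hef⟩ := exists_dual_basis k A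
    have key : ∀ φ : Module.Dual k A,
        oneTensorMap k A φ (∑ i, g (f i) ⊗ₜ[k] e i) = g φ := by
      intro φ
      have hφ : φ = ∑ i, (algebraMap k A (φ (e i))) • f i := by
        ext b
        conv_lhs => rw [← hef b, map_sum]
        rw [LinearMap.sum_apply]
        refine Finset.sum_congr rfl fun i _ => ?_
        rw [dual_smul_apply, ← Algebra.smul_def, map_smul, map_smul, smul_eq_mul, smul_eq_mul,
          mul_comm]
      conv_rhs => rw [hφ, map_sum]
      rw [map_sum]
      refine Finset.sum_congr rfl fun i _ => ?_
      rw [oneTensorMap_tmul, LinearMap.map_smul, algebraMap_smul]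
    refine ⟨⟨∑ i, g (f i) ⊗ₜ[k] e i, ?_⟩, ?_⟩
    · rw [mem_Jann_iff]
      intro a
      apply oneTensorMap_ext
      intro φ
      rw [oneTensorMap_right, oneTensorMap_left, key, key, LinearMap.map_smul, smul_eq_mul]
    · exact LinearMap.ext fun φ => key φ

/-- Let `k` be a commutative ring and `A` a commutative `k`-algebra which is
finitely generated and projective as a `k`-module.  With `I = ker(μ)` and
`J = Ann_{A⊗[k]A}(I)` as above, the map `θ0 : A^∨ → Hom_A(J, A)`, sending `φ` to the
restriction to `J` of `1 ⊗ φ : A ⊗[k] A → A` (`a ⊗ b ↦ φ(b)·a`), is `A`-linear (in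
particular each restriction is `A`-linear and lands in `A`), and the adjoint map
`θ1 : J → Hom_A(A^∨, A)`, `θ1(u)(φ) = (1 ⊗ φ)(u)`, is an isomorphism of `A`-modules. -/
theorem stmt1 [Module.Finite k A] [Module.Projective k A] :
    (∃ Θ : Module.Dual k A →ₗ[A] (↥(Jann k A) →ₗ[A] A),
        ∀ (φ : Module.Dual k A) (x : ↥(Jann k A)),
          Θ φ x = oneTensorMap k A φ (x : A ⊗[k] A)) ∧
      ∃ e : ↥(Jann k A) ≃ₗ[A] (Module.Dual k A →ₗ[A] A),
        ∀ (u : ↥(Jann k A)) (φ : Module.Dual k A),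
          e u φ = oneTensorMap k A φ (u : A ⊗[k] A) := by
  exact ⟨⟨thetaZero k A, fun _ _ => rfl⟩,
    LinearEquiv.ofBijective (thetaOne k A) (thetaOne_bijective k A), fun _ _ => rfl⟩

end
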